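/- Let X, A, R be finite nonempty sets, H, K complex Hilbert spaces, and U = (U_{a,x}) a block operator isometry over (X,A) with entries in B(H,K). Let ξ = Σ_{x∈X,r∈R} ξ_{x,r} e_x ⊗ e_r ∈ ℂ^X ⊗ ℂ^R be a unit vector, let m ∈ ℕ, λ₁,…,λ_m ≥ 0, and γ_k = Σ_{a∈A,r∈R} γ_{k,a,r} e_a ⊗ e_r ∈ ℂ^A ⊗ ℂ^R be unit vectors, and set P = Σ_{k=1}^m λ_k γ_k γ_k*. Define matrices ρ_k ∈ M_{X,A}(ℂ) by (ρ_k)_{x,a} = √λ_k · Σ_{r∈R} γ_{k,a,r} · conj(ξ_{x,r}), and operators φ_U(ρ_k) = Σ_{x∈X,a∈A} (ρ_k)_{x,a} U_{a,x} ∈ B(H,K). Then: (1) for every unit vector ζ ∈ H, Tr((Γ_{U,ζ} ⊗ id_{M_R})(ξξ*) P) = Σ_{k=1}^m ‖φ_U(ρ_k) ζ‖², where Γ_{U,ζ} : M_X → M_A is the linear map with Γ_{U,ζ}(ε_{x,x'}) = Σ_{a,a'∈A} ⟨U_{a,x}* U_{a',x'} ζ, ζ⟩ ε_{a,a'} and Γ_{U,ζ}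 ⊗ id_{M_R} acts on M_X ⊗ M_R = M_{X×R}; and (2) the supremum over all unit vectors ζ ∈ H of Tr((Γ_{U,ζ} ⊗ id_{M_R})(ξξ*) P) equals ‖Σ_{k=1}^m φ_U(ρ_k)* φ_U(ρ_k)‖. -/

import Mathlib

open ContinuousLinearMap
open scoped ComplexInnerProductSpace

theorem aux_norm_sum {H K : Type*}
    [NormedAddCommGroup H] [InnerProductSpace ℂ H] [CompleteSpace H]
    [NormedAddCommGroup K] [InnerProductSpace ℂ K] [CompleteSpace K]
    {m : ℕ} (Φ : Fin m → (H →L[ℂ] K)) (c : ℝ) (hc : 0 ≤ c)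
    (h : ∀ ζ : H, ‖ζ‖ = 1 → ∑ k, ‖Φ k ζ‖ ^ 2 ≤ c) :
    ‖∑ k, (adjoint (Φ k)) ∘L (Φ k)‖ ≤ c := by
  have h' : ∀ z : H, ∑ k, ‖Φ k z‖ ^ 2 ≤ c * ‖z‖ ^ 2 := by
    intro z
    by_cases hz : z = 0
    · simp [hz]
    have hz' : ‖z‖ ≠ 0 := norm_ne_zero_iff.mpr hz
    have := h ((‖z‖⁻¹ : ℂ) • z) (by simp [norm_smul, hz'])
    simp only [map_smul, norm_smul, mul_pow, ← Finset.mul_sum] at this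
    simp only [norm_inv, Complex.norm_real, norm_norm] at this
    have hp : 0 < ‖z‖ ^ 2 := by positivity
    rw [inv_pow, inv_mul_le_iff₀ hp] at this
    linarith
  refine ContinuousLinearMap.opNorm_le_bound _ hc fun x => ?_
  set T := ∑ k, (adjoint (Φ k)) ∘L (Φ k) with hT
  have key : ∀ y : H, ‖(⟪y, T x⟫ : ℂ)‖ ≤ c * ‖x‖ * ‖y‖ := by
    intro y
    have e : (⟪y, T x⟫ : ℂ) = ∑ k, ⟪Φ k y, Φ k x⟫ := by
      simp [hT, ContinuousLinearMap.sum_apply, inner_sum, adjoint_inner_right]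
    rw [e]
    have h1 : ‖∑ k, (⟪Φ k y, Φ k x⟫ : ℂ)‖ ≤ ∑ k, ‖Φ k y‖ * ‖Φ k x‖ :=
      (norm_sum_le _ _).trans (Finset.sum_le_sum fun k _ => norm_inner_le_norm _ _)
    have h2 := Finset.sum_mul_sq_le_sq_mul_sq Finset.univ (fun k => ‖Φ k y‖) (fun k => ‖Φ k x‖)
    refine h1.trans (abs_le_of_sq_le_sq' (h2.trans ?_) (by positivity)).2
    calc _ ≤ (c * ‖y‖ ^ 2) * (c * ‖x‖ ^ 2) :=
          mul_le_mul (h' y) (h' x) (by positivity) (by positivity)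
      _ = _ := by ring
  have := key (T x)
  rw [inner_self_eq_norm_sq_to_K] at this
  by_cases h0 : ‖T x‖ = 0
  · rw [h0]; positivity
  have hp : 0 < ‖T x‖ := lt_of_le_of_ne (norm_nonneg _) (Ne.symm h0)
  simp at this
  nlinarith

/-- The value of a pair `(ξ, P)` at a block-operator-isometry strategy:
the trace formula and its supremum over vector states. -/
theorem statement7
    {X A R : Type*} [Fintype X] [Fintype A] [Fintype R]
    [Nonempty X] [Nonempty A] [Nonempty R]
    [DecidableEq X] [DecidableEq A] [DecidableEq R]
    {H K : Type*}
    [NormedAddCommGroup H] [InnerProductSpace ℂ H] [CompleteSpace H]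
    [NormedAddCommGroup K] [InnerProductSpace ℂ K] [CompleteSpace K]
    (U : A → X → (H →L[ℂ] K))
    (hU : ∀ x x' : X, ∑ a : A, (adjoint (U a x)) ∘L (U a x') = if x = x' then 1 else 0)
    (ξc : X → R → ℂ) (hξ : ∑ x : X, ∑ r : R, ‖ξc x r‖ ^ 2 = 1)
    (m : ℕ) (lam : Fin m → ℝ) (hlam : ∀ k, 0 ≤ lam k)
    (γ : Fin m → A → R → ℂ)
    (hγ : ∀ k, ∑ a : A, ∑ r : R, ‖γ k a r‖ ^ 2 = 1)
    (ρm : Fin m → X → A → ℂ)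
    (hρ : ∀ k x a, ρm k x a
      = (Real.sqrt (lam k) : ℂ) * ∑ r : R, γ k a r * (starRingEnd ℂ) (ξc x r))
    (Φ : Fin m → (H →L[ℂ] K))
    (hΦ : ∀ k, Φ k = ∑ x : X, ∑ a : A, ρm k x a • U a x)
    (P : Matrix (A × R) (A × R) ℂ)
    (hP : P = Matrix.of fun p q =>
      ∑ k, (lam k : ℂ) * γ k p.1 p.2 * (starRingEnd ℂ) (γ k q.1 q.2))
    (M : H → Matrix (A × R) (A × R) ℂ)
    (hM : ∀ ζ : H, M ζ = Matrix.of fun p q =>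
      ∑ x : X, ∑ x' : X,
        (⟪ζ, ((adjoint (U p.1 x)) ∘L (U q.1 x')) ζ⟫ : ℂ)
          * ξc x p.2 * (starRingEnd ℂ) (ξc x' q.2)) :
    (∀ ζ : H, ‖ζ‖ = 1 →
        Matrix.trace (M ζ * P) = ((∑ k, ‖(Φ k) ζ‖ ^ 2 : ℝ) : ℂ)) ∧
    sSup {t : ℝ | ∃ ζ : H, ‖ζ‖ = 1 ∧ (t : ℂ) = Matrix.trace (M ζ * P)}
      = ‖∑ k, (adjoint (Φ k)) ∘L (Φ k)‖ := by
  have part1 : ∀ ζ : H, Matrix.trace (M ζ * P) = ((∑ k, ‖(Φ k) ζ‖ ^ 2 : ℝ) : ℂ) := by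
    intro ζ
    -- vector form of `Φ k ζ`
    have hv : ∀ k, Φ k ζ = (Real.sqrt (lam k) : ℂ) • ∑ p : A × R, ∑ x : X,
        (γ k p.1 p.2 * (starRingEnd ℂ) (ξc x p.2)) • U p.1 x ζ := by
      intro k
      rw [hΦ, ContinuousLinearMap.sum_apply, Finset.sum_comm (s := (Finset.univ : Finset (A × R))),
        Finset.smul_sum]
      refine Finset.sum_congr rfl fun x _ => ?_
      rw [ContinuousLinearMap.sum_apply, Fintype.sum_prod_type, Finset.smul_sum]
      refine Finset.sum_congr rfl fun a _ => ?_
      rw [ContinuousLinearMap.smul_apply, hρ, mul_smul, Finset.sum_smul]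
    have hk : ∀ k, ((‖Φ k ζ‖ ^ 2 : ℝ) : ℂ) = ∑ p : A × R, ∑ q : A × R, ∑ x : X, ∑ x' : X,
        (⟪U p.1 x ζ, U q.1 x' ζ⟫ : ℂ) * ξc x p.2 * (starRingEnd ℂ) (ξc x' q.2)
          * ((lam k : ℂ) * γ k q.1 q.2 * (starRingEnd ℂ) (γ k p.1 p.2)) := by
      intro k
      have hs : (Real.sqrt (lam k) : ℂ) * (Real.sqrt (lam k) : ℂ) = lam k := by
        rw [← Complex.ofReal_mul, Real.mul_self_sqrt (hlam k)]
      have e : ((‖Φ k ζ‖ ^ 2 : ℝ) : ℂ) = ⟪Φ k ζ, Φ k ζ⟫ := by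
        rw [inner_self_eq_norm_sq_to_K]; simp
      rw [e, hv, inner_smul_left, inner_smul_right, Complex.conj_ofReal, ← mul_assoc, hs,
        sum_inner, Finset.mul_sum]
      refine Finset.sum_congr rfl fun p _ => ?_
      rw [inner_sum, Finset.mul_sum]
      refine Finset.sum_congr rfl fun q _ => ?_
      rw [sum_inner, Finset.mul_sum]
      refine Finset.sum_congr rfl fun x _ => ?_
      rw [inner_sum, Finset.mul_sum]
      refine Finset.sum_congr rfl fun x' _ => ?_
      rw [inner_smul_left, inner_smul_right, map_mul, Complex.conj_conj]
      ring
    rw [Complex.ofReal_sum, Finset.sum_congr rfl fun k _ => hk k, Finset.sum_comm]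
    simp only [Matrix.trace, Matrix.diag, Matrix.mul_apply, hM, hP, Matrix.of_apply]
    refine Finset.sum_congr rfl fun p _ => ?_
    rw [Finset.sum_comm]
    refine Finset.sum_congr rfl fun q _ => ?_
    rw [Finset.mul_sum]
    refine Finset.sum_congr rfl fun k _ => ?_
    rw [Finset.sum_mul]
    refine Finset.sum_congr rfl fun x _ => ?_
    rw [Finset.sum_mul]
    refine Finset.sum_congr rfl fun x' _ => ?_
    rw [ContinuousLinearMap.comp_apply, adjoint_inner_right]
  refine ⟨fun ζ _ => part1 ζ, ?_⟩
  have hub : ∀ t ∈ {t : ℝ | ∃ ζ : H, ‖ζ‖ = 1 ∧ (t : ℂ) = Matrix.trace (M ζ * P)},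
      t ≤ ‖∑ k, (adjoint (Φ k)) ∘L (Φ k)‖ := by
    rintro t ⟨ζ, hζ, ht⟩
    rw [part1, Complex.ofReal_inj] at ht
    have e : ((t : ℝ) : ℂ) = ⟪ζ, (∑ k, (adjoint (Φ k)) ∘L (Φ k)) ζ⟫ := by
      simp [ht, ContinuousLinearMap.sum_apply, inner_sum, adjoint_inner_right,
        inner_self_eq_norm_sq_to_K]
    calc t ≤ ‖(t : ℂ)‖ := by rw [Complex.norm_real]; exact le_abs_self t
      _ ≤ ‖ζ‖ * ‖(∑ k, (adjoint (Φ k)) ∘L (Φ k)) ζ‖ := by rw [e]; exact norm_inner_le_norm _ _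
      _ ≤ _ := by
        rw [hζ, one_mul]
        simpa [hζ] using (∑ k, (adjoint (Φ k)) ∘L (Φ k)).le_opNorm ζ
  apply le_antisymm
  · exact Real.sSup_le hub (norm_nonneg _)
  · refine aux_norm_sum Φ _ (Real.sSup_nonneg ?_) ?_
    · rintro t ⟨ζ, hζ, ht⟩
      rw [part1, Complex.ofReal_inj] at ht
      rw [ht]; positivity
    · intro ζ hζ
      exact le_csSup ⟨_, hub⟩ ⟨ζ, hζ, (part1 ζ).symm⟩
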